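/- arXiv:1205.5424 — 2 statements merged into one kernel-verified Lean document; each statement's English description precedes it below -/
import Mathlib

section
/- Let M and M' be matroids on the same finite ground set E, with rank functions r and r'. Then the following are equivalent: (i) every circuit of M is a union of circuits of M', i.e. every element of a circuit C of M lies in some circuit of M' contained in C; (iv) for all Y ⊆ X ⊆ E, one has r'(X) - r'(Y) ≤ r(X) - r(Y). -/
open Set

/-- The rank of a set in a matroid: the largest cardinality of an independent subset. -/
noncomputable def Matroid.rk' {α : Type*} (M : Matroid α) (X : Set α) : ℕ :=
  sSup {n | ∃ I, M.Indep I ∧ I ⊆ X ∧ I.ncard = n}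

/-- A circuit of a matroid is a minimal dependent set. -/
def Matroid.IsCircuit' {α : Type*} (M : Matroid α) (C : Set α) : Prop :=
  Minimal M.Dep C

theorem Matroid.cast_rk' {α : Type*} (M : Matroid α) (hfin : M.E.Finite) (X : Set α) :
    (M.rk' X : ℕ∞) = M.eRk X := by
  obtain ⟨I, hI⟩ := M.exists_isBasis' X
  have hIf : I.Finite := hfin.subset hI.indep.subset_ground
  rw [← hI.encard_eq_eRk, ← hIf.cast_ncard_eq]
  congr 1
  refine IsGreatest.csSup_eq ⟨⟨I, hI.indep, hI.subset, rfl⟩, ?_⟩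
  rintro n ⟨J, hJ, hJX, rfl⟩
  have h := hJ.encard_le_eRk_of_subset hJX
  rw [← hI.encard_eq_eRk, ← hIf.cast_ncard_eq,
    ← (hfin.subset hJ.subset_ground).cast_ncard_eq] at h
  exact_mod_cast h

theorem Matroid.rk'_insert_of_mem {α : Type*} (M : Matroid α) (hfin : M.E.Finite) {X : Set α}
    {e : α} (he : e ∈ M.closure X) : M.rk' (insert e X) = M.rk' X := by
  have h : (M.rk' (insert e X) : ℕ∞) = M.rk' X := by
    rw [M.cast_rk' hfin, M.cast_rk' hfin, ← M.eRk_closure_eq,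
      Matroid.closure_insert_eq_of_mem_closure he, M.eRk_closure_eq]
  exact_mod_cast h

theorem Matroid.rk'_insert_of_notMem {α : Type*} (M : Matroid α) (hfin : M.E.Finite) {X : Set α}
    {e : α} (heE : e ∈ M.E) (he : e ∉ M.closure X) : M.rk' (insert e X) = M.rk' X + 1 := by
  have h : (M.rk' (insert e X) : ℕ∞) = M.rk' X + 1 := by
    rw [M.cast_rk' hfin, M.cast_rk' hfin, Matroid.eRk_insert_eq_add_one ⟨heE, he⟩]
  exact_mod_cast h

/-- for matroids `M`, `M'` on the same finite ground set, the condition that every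
circuit of `M` is a union of circuits of `M'` is equivalent to the rank inequality
`r'(X) - r'(Y) ≤ r(X) - r(Y)` for all `Y ⊆ X ⊆ E`. -/
theorem statement1 {α : Type*} (M M' : Matroid α) (hE : M.E = M'.E) (hfin : M.E.Finite) :
    (∀ C : Set α, M.IsCircuit' C → ∀ e ∈ C, ∃ C' : Set α, M'.IsCircuit' C' ∧ e ∈ C' ∧ C' ⊆ C) ↔
      (∀ ⦃Y X : Set α⦄, Y ⊆ X → X ⊆ M.E →
        (M'.rk' X : ℤ) - M'.rk' Y ≤ (M.rk' X : ℤ) - M.rk' Y) := by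
  have hfin' : M'.E.Finite := hE ▸ hfin
  constructor
  · intro h Y X hYX hX
    have key : ∀ T : Set α, T.Finite → T ⊆ M.E →
        (M'.rk' (T ∪ Y) : ℤ) - M'.rk' Y ≤ (M.rk' (T ∪ Y) : ℤ) - M.rk' Y := by
      intro T hT
      induction T, hT using Set.Finite.induction_on with
      | empty => simp
      | @insert e T _ _ ih =>
        intro hTE
        have heE : e ∈ M.E := hTE (mem_insert _ _)
        have ih := ih ((subset_insert _ _).trans hTE)
        rw [insert_union]
        by_cases heZ : e ∈ T ∪ Y
        · rwa [insert_eq_of_mem heZ]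
        by_cases he : e ∈ M.closure (T ∪ Y)
        · have he' : e ∈ M'.closure (T ∪ Y) := by
            obtain ⟨C, hCs, hC, heC⟩ := Matroid.exists_isCircuit_of_mem_closure he heZ
            obtain ⟨C', hC', heC', hs⟩ := h C hC e heC
            exact (Matroid.mem_closure_iff_exists_isCircuit heZ).2
              ⟨C', hs.trans hCs, hC', heC'⟩
          rwa [M.rk'_insert_of_mem hfin he, M'.rk'_insert_of_mem hfin' he']
        · rw [M.rk'_insert_of_notMem hfin heE he]
          by_cases he' : e ∈ M'.closure (T ∪ Y)
          · rw [M'.rk'_insert_of_mem hfin' he']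
            push_cast; linarith
          · rw [M'.rk'_insert_of_notMem hfin' (hE ▸ heE) he']
            push_cast; linarith
    have := key X (hfin.subset hX) hX
    rwa [union_eq_self_of_subset_right hYX] at this
  · intro h C hC e heC
    have hC1 : M.IsCircuit C := hC
    have hins : insert e (C \ {e}) = C := by simp [insert_eq_of_mem heC]
    have hle := h (sdiff_subset : C \ {e} ⊆ C) hC1.subset_ground
    have hr := M.rk'_insert_of_mem hfin (hC1.mem_closure_sdiff_singleton_of_mem heC)
    rw [hins] at hr
    have he' : e ∈ M'.closure (C \ {e}) := by
      by_contra hcon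
      have hr' := M'.rk'_insert_of_notMem hfin' (hE ▸ hC1.subset_ground heC) hcon
      rw [hins] at hr'
      omega
    obtain ⟨C', hs, hC', heC'⟩ := Matroid.exists_isCircuit_of_mem_closure he' (by simp)
    exact ⟨C', hC', heC', hins ▸ hs⟩
end

section
/- (2-variable orientation-activity expansion, realizable case.) For every vector configuration v : Fin n → V and all real numbers x, y: t(2x, 2y) = ∑_{A ⊆ Fin n} x^{o*(A)} · y^{o(A)}. -/
open Set Submodule

/-- The reorientation of the vector configuration `v` on the subset `A`:
vectors indexed by `A` are negated. -/
def reorient {n : ℕ} {V : Type*} [AddCommGroup V] (v : Fin n → V) (A : Finset (Fin n)) :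
    Fin n → V :=
  fun i => if i ∈ A then -v i else v i

/-- `a` is orientation-active for the configuration `w`: it is the smallest element of a
positive circuit, i.e. there is a nonnegative linear dependence with positive coefficient
at `a` and zero coefficients below `a`. -/
def OActive {n : ℕ} {V : Type*} [AddCommGroup V] [Module ℝ V]
    (w : Fin n → V) (a : Fin n) : Prop :=
  ∃ c : Fin n → ℝ, (∀ i, 0 ≤ c i) ∧ (∑ i, c i • w i) = 0 ∧ 0 < c a ∧ ∀ i < a, c i = 0

/-- `a` is dually orientation-active for the configuration `w`: it is the smallest element of
a positive cocircuit, i.e. there is a linear functional, nonnegative on the configuration,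
positive at `w a` and vanishing on the vectors below `a`. -/
def ODualActive {n : ℕ} {V : Type*} [AddCommGroup V] [Module ℝ V]
    (w : Fin n → V) (a : Fin n) : Prop :=
  ∃ f : V →ₗ[ℝ] ℝ, (∀ i, 0 ≤ f (w i)) ∧ 0 < f (w a) ∧ ∀ i < a, f (w i) = 0

/-- `θ*(A)`: the number of elements outside `A` that are dually orientation-active for `v_A`. -/
noncomputable def thetaStar {n : ℕ} {V : Type*} [AddCommGroup V] [Module ℝ V]
    (v : Fin n → V) (A : Finset (Fin n)) : ℕ :=
  {a : Fin n | a ∉ A ∧ ODualActive (reorient v A) a}.ncard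

/-- `θ̄*(A)`: the number of elements of `A` that are dually orientation-active for `v_A`. -/
noncomputable def thetaStarBar {n : ℕ} {V : Type*} [AddCommGroup V] [Module ℝ V]
    (v : Fin n → V) (A : Finset (Fin n)) : ℕ :=
  {a : Fin n | a ∈ A ∧ ODualActive (reorient v A) a}.ncard

/-- `θ(A)`: the number of elements outside `A` that are orientation-active for `v_A`. -/
noncomputable def theta {n : ℕ} {V : Type*} [AddCommGroup V] [Module ℝ V]
    (v : Fin n → V) (A : Finset (Fin n)) : ℕ :=
  {a : Fin n | a ∉ A ∧ OActive (reorient v A) a}.ncard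

/-- `θ̄(A)`: the number of elements of `A` that are orientation-active for `v_A`. -/
noncomputable def thetaBar {n : ℕ} {V : Type*} [AddCommGroup V] [Module ℝ V]
    (v : Fin n → V) (A : Finset (Fin n)) : ℕ :=
  {a : Fin n | a ∈ A ∧ OActive (reorient v A) a}.ncard

/-- The rank of a set of indices: the dimension of the span of the corresponding vectors. -/
noncomputable def vrank {n : ℕ} {V : Type*} [AddCommGroup V] [Module ℝ V]
    (v : Fin n → V) (S : Set (Fin n)) : ℕ :=
  Module.finrank ℝ ↥(span ℝ (v '' S))

/-- The Tutte polynomial of the matroid realized by the configuration `v`: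
`t(x,y) = ∑_{A ⊆ Fin n} (x-1)^(r(E) - r(A)) * (y-1)^(|A| - r(A))`. -/
noncomputable def tutteV {n : ℕ} {V : Type*} [AddCommGroup V] [Module ℝ V]
    (v : Fin n → V) (x y : ℝ) : ℝ :=
  ∑ A : Finset (Fin n),
    (x - 1) ^ (vrank v Set.univ - vrank v ↑A) * (y - 1) ^ (A.card - vrank v ↑A)

/-- `o(A)`: the number of orientation-active elements for the reorientation `v_A`. -/
noncomputable def oCount {n : ℕ} {V : Type*} [AddCommGroup V] [Module ℝ V]
    (v : Fin n → V) (A : Finset (Fin n)) : ℕ :=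
  {a : Fin n | OActive (reorient v A) a}.ncard

/-- `o*(A)`: the number of dually orientation-active elements for the reorientation `v_A`. -/
noncomputable def oStarCount {n : ℕ} {V : Type*} [AddCommGroup V] [Module ℝ V]
    (v : Fin n → V) (A : Finset (Fin n)) : ℕ :=
  {a : Fin n | ODualActive (reorient v A) a}.ncard

/-- Activity of an element `a` of `w` in the configuration `w` extended by a last vector `u`. -/
def ExtO {n : ℕ} {V : Type*} [AddCommGroup V] [Module ℝ V]
    (w : Fin n → V) (u : V) (a : Fin n) : Prop :=
  ∃ c : Fin n → ℝ, ∃ t : ℝ, (∀ i, 0 ≤ c i) ∧ 0 ≤ t ∧ (∑ i, c i • w i) + t • u = 0 ∧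
    0 < c a ∧ ∀ i < a, c i = 0

/-- Dual activity of an element `a` of `w` in `w` extended by a last vector `u`. -/
def ExtD {n : ℕ} {V : Type*} [AddCommGroup V] [Module ℝ V]
    (w : Fin n → V) (u : V) (a : Fin n) : Prop :=
  ∃ f : V →ₗ[ℝ] ℝ, (∀ i, 0 ≤ f (w i)) ∧ 0 ≤ f u ∧ 0 < f (w a) ∧ ∀ i < a, f (w i) = 0

section ext
variable {n : ℕ} {V : Type*} [AddCommGroup V] [Module ℝ V]

lemma oActive_castSucc (w : Fin (n + 1) → V) (a : Fin n) :
    OActive w a.castSucc ↔ ExtO (fun i => w i.castSucc) (w (Fin.last n)) a := by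
  constructor
  · rintro ⟨c, h0, hs, ha, hl⟩
    refine ⟨fun i => c i.castSucc, c (Fin.last n), fun i => h0 _, h0 _, ?_, ha, ?_⟩
    · rw [← hs, Fin.sum_univ_castSucc]
    · intro i hi
      exact hl _ (Fin.castSucc_lt_castSucc_iff.2 hi)
  · rintro ⟨c, t, h0, ht, hs, ha, hl⟩
    refine ⟨Fin.snoc c t, ?_, ?_, by simpa using ha, ?_⟩
    · intro i
      refine Fin.lastCases ?_ (fun i => ?_) i
      · simpa using ht
      · simpa using h0 i
    · rw [← hs, Fin.sum_univ_castSucc]; simp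
    · intro i
      refine Fin.lastCases ?_ (fun i => ?_) i
      · intro h
        exact absurd h (not_lt.2 (Fin.le_last _))
      · intro h
        simpa using hl i (Fin.castSucc_lt_castSucc_iff.1 h)

lemma oDualActive_castSucc (w : Fin (n + 1) → V) (a : Fin n) :
    ODualActive w a.castSucc ↔ ExtD (fun i => w i.castSucc) (w (Fin.last n)) a := by
  constructor
  · rintro ⟨f, h0, ha, hl⟩
    exact ⟨f, fun i => h0 _, h0 _, ha, fun i hi => hl _ (Fin.castSucc_lt_castSucc_iff.2 hi)⟩
  · rintro ⟨f, h0, hu, ha, hl⟩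
    refine ⟨f, ?_, ha, ?_⟩
    · intro i
      exact Fin.lastCases hu (fun i => h0 i) i
    · intro i
      refine Fin.lastCases ?_ (fun i => ?_) i
      · intro h
        exact absurd h (not_lt.2 (Fin.le_last _))
      · intro h
        exact hl i (Fin.castSucc_lt_castSucc_iff.1 h)

lemma oActive_last (w : Fin (n + 1) → V) :
    OActive w (Fin.last n) ↔ w (Fin.last n) = 0 := by
  constructor
  · rintro ⟨c, h0, hs, ha, hl⟩
    rw [Fin.sum_univ_castSucc, Finset.sum_eq_zero, zero_add] at hs
    · exact (smul_eq_zero.1 hs).resolve_left ha.ne'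
    · intro i _
      rw [hl _ (Fin.castSucc_lt_last i), zero_smul]
  · intro h
    refine ⟨Fin.snoc 0 1, ?_, ?_, by simp, ?_⟩
    · intro i
      refine Fin.lastCases ?_ (fun i => ?_) i <;> simp
    · rw [Fin.sum_univ_castSucc]; simp [h]
    · intro i
      refine Fin.lastCases ?_ (fun i => ?_) i <;> simp

lemma oDualActive_last (w : Fin (n + 1) → V) :
    ODualActive w (Fin.last n) ↔
      w (Fin.last n) ∉ span ℝ (range fun i : Fin n => w i.castSucc) := by
  constructor
  · rintro ⟨f, h0, ha, hl⟩ hm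
    have : span ℝ (range fun i : Fin n => w i.castSucc) ≤ LinearMap.ker f := by
      rw [span_le]
      rintro _ ⟨i, rfl⟩
      exact hl _ (Fin.castSucc_lt_last i)
    exact ha.ne' (this hm)
  · intro h
    obtain ⟨f, hf, hk⟩ := Submodule.exists_le_ker_of_notMem h
    have hz : ∀ i : Fin n, f (w i.castSucc) = 0 := fun i =>
      hk (subset_span ⟨i, rfl⟩)
    refine ⟨f (w (Fin.last n)) • f, ?_, ?_, ?_⟩
    · intro i
      refine Fin.lastCases ?_ (fun i => ?_) i
      · simpa using mul_self_nonneg _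
      · simp [hz]
    · simpa using mul_self_pos.2 hf
    · intro i
      refine Fin.lastCases ?_ (fun i => ?_) i
      · simp
      · simp [hz]

/-- deletion: orientation activity. -/
lemma oActive_iff_and (w : Fin n → V) (u : V) (a : Fin n) :
    OActive w a ↔ ExtO w u a ∧ ExtO w (-u) a := by
  constructor
  · rintro ⟨c, h0, hs, ha, hl⟩
    exact ⟨⟨c, 0, h0, le_rfl, by simp [hs], ha, hl⟩, ⟨c, 0, h0, le_rfl, by simp [hs], ha, hl⟩⟩
  · rintro ⟨⟨c, t, h0, ht, hs, ha, hl⟩, ⟨d, s, h0', ht', hs', ha', hl'⟩⟩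
    rcases ht.eq_or_lt with rfl | ht
    · exact ⟨c, h0, by simpa using hs, ha, hl⟩
    · refine ⟨fun i => s * c i + t * d i, ?_, ?_, ?_, ?_⟩
      · intro i
        have := h0 i
        have := h0' i
        positivity
      · simp only [add_smul, mul_smul, Finset.sum_add_distrib, ← Finset.smul_sum]
        rw [eq_neg_of_add_eq_zero_left hs, eq_neg_of_add_eq_zero_left hs']
        module
      · have := mul_pos ht ha'
        have := mul_nonneg ht' ha.le
        simp only
        linarith
      · intro i hi
        simp [hl i hi, hl' i hi]

lemma oDualActive_iff_or (w : Fin n → V) (u : V) (a : Fin n) :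
    ODualActive w a ↔ ExtD w u a ∨ ExtD w (-u) a := by
  constructor
  · rintro ⟨f, h0, ha, hl⟩
    rcases le_total 0 (f u) with h | h
    · exact Or.inl ⟨f, h0, h, ha, hl⟩
    · exact Or.inr ⟨f, h0, by simpa using h, ha, hl⟩
  · rintro (⟨f, h0, _, ha, hl⟩ | ⟨f, h0, _, ha, hl⟩) <;> exact ⟨f, h0, ha, hl⟩

/-- contraction -/
lemma oActive_mkQ_iff (w : Fin n → V) (u : V) (a : Fin n) :
    OActive (fun i => (span ℝ {u}).mkQ (w i)) a ↔ ExtO w u a ∨ ExtO w (-u) a := by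
  constructor
  · rintro ⟨c, h0, hs, ha, hl⟩
    have : (span ℝ {u}).mkQ (∑ i, c i • w i) = 0 := by rw [← hs]; simp
    rw [mkQ_apply, Quotient.mk_eq_zero, mem_span_singleton] at this
    obtain ⟨t, ht⟩ := this
    rcases le_total 0 t with h | h
    · exact Or.inr ⟨c, t, h0, h, by rw [← ht]; module, ha, hl⟩
    · exact Or.inl ⟨c, -t, h0, by linarith, by rw [← ht]; module, ha, hl⟩
  · have key : ∀ c : Fin n → ℝ, ∀ t : ℝ, (∑ i, c i • w i) + t • u = 0 →
        ∑ i, c i • (span ℝ {u}).mkQ (w i) = 0 := by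
      intro c t h
      have : (span ℝ {u}).mkQ (∑ i, c i • w i) = 0 := by
        rw [mkQ_apply, Quotient.mk_eq_zero, mem_span_singleton]
        exact ⟨-t, by rw [eq_neg_of_add_eq_zero_left h]; module⟩
      rw [← this]; simp
    rintro (⟨c, t, h0, _, hs, ha, hl⟩ | ⟨c, t, h0, _, hs, ha, hl⟩)
    · exact ⟨c, h0, key c t hs, ha, hl⟩
    · exact ⟨c, h0, key c (-t) (by rw [← hs]; module), ha, hl⟩

lemma oDualActive_mkQ_iff (w : Fin n → V) (u : V) (a : Fin n) :
    ODualActive (fun i => (span ℝ {u}).mkQ (w i)) a ↔ ExtD w u a ∧ ExtD w (-u) a := by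
  have key : ∀ f : V →ₗ[ℝ] ℝ, f u = 0 → (∀ i, 0 ≤ f (w i)) → 0 < f (w a) →
      (∀ i < a, f (w i) = 0) → ODualActive (fun i => (span ℝ {u}).mkQ (w i)) a := by
    intro f hu h0 ha hl
    refine ⟨(span ℝ {u}).liftQ f ?_, ?_⟩
    · rw [span_le]
      rintro _ rfl
      exact hu
    · simpa using ⟨h0, ha, hl⟩
  constructor
  · rintro ⟨f, h0, ha, hl⟩
    have hu : (span ℝ {u}).mkQ u = 0 := by
      rw [mkQ_apply, Quotient.mk_eq_zero]
      exact mem_span_singleton_self u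
    exact ⟨⟨f ∘ₗ (span ℝ {u}).mkQ, h0, by simp only [LinearMap.comp_apply, hu, map_zero, le_refl],
        ha, hl⟩, ⟨f ∘ₗ (span ℝ {u}).mkQ, h0,
        by simp only [LinearMap.comp_apply, map_neg, hu, map_zero, neg_zero, le_refl], ha, hl⟩⟩
  · rintro ⟨⟨f, h0, hu, ha, hl⟩, ⟨g, h0', hu', ha', hl'⟩⟩
    rw [map_neg] at hu'
    rcases hu.eq_or_lt with hz | hpos
    · exact key f hz.symm h0 ha hl
    · apply key ((-g u) • f + (f u) • g)
      · simp; ring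
      · intro i
        have := mul_nonneg hu' (h0 i)
        have := mul_nonneg hu (h0' i)
        simp only [LinearMap.add_apply, LinearMap.smul_apply, smul_eq_mul]
        linarith
      · have := mul_nonneg hu' ha.le
        have := mul_pos hpos ha'
        simp only [LinearMap.add_apply, LinearMap.smul_apply, smul_eq_mul]
        linarith
      · intro i hi
        simp [hl i hi, hl' i hi]

/-- Comparability for orientation activities. -/
lemma extO_cmp (w : Fin n → V) (u : V) (a b : Fin n) (ha : ExtO w u a) (hb : ExtO w (-u) b) :
    ExtO w (-u) a ∨ ExtO w u b := by
  obtain ⟨c, t, h0, ht, hs, ha, hl⟩ := ha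
  obtain ⟨d, s, h0', ht', hs', hb, hl'⟩ := hb
  rcases ht.eq_or_lt with rfl | ht
  · exact Or.inl ⟨c, 0, h0, le_rfl, by simpa using hs, ha, hl⟩
  rcases ht'.eq_or_lt with rfl | ht'
  · exact Or.inr ⟨d, 0, h0', le_rfl, by simpa using hs', hb, hl'⟩
  have hnn : ∀ i, 0 ≤ s * c i + t * d i := by
    intro i
    have := h0 i
    have := h0' i
    positivity
  have hsum : ∑ i, (s * c i + t * d i) • w i = 0 := by
    simp only [add_smul, mul_smul, Finset.sum_add_distrib, ← Finset.smul_sum]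
    rw [eq_neg_of_add_eq_zero_left hs, eq_neg_of_add_eq_zero_left hs']
    module
  rcases le_total a b with hab | hab
  · left
    refine ⟨fun i => s * c i + t * d i, 0, hnn, le_rfl, by simpa using hsum, ?_, ?_⟩
    · have := mul_pos ht' ha
      have := mul_nonneg ht.le (h0' a)
      simp only
      linarith
    · intro i hi
      simp [hl i hi, hl' i (hi.trans_le hab)]
  · right
    refine ⟨fun i => s * c i + t * d i, 0, hnn, le_rfl, by simpa using hsum, ?_, ?_⟩
    · have := mul_pos ht hb
      have := mul_nonneg ht'.le (h0 b)
      simp only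
      linarith
    · intro i hi
      simp [hl' i hi, hl i (hi.trans_le hab)]

lemma extD_cmp (w : Fin n → V) (u : V) (a b : Fin n) (ha : ExtD w u a) (hb : ExtD w (-u) b) :
    ExtD w (-u) a ∨ ExtD w u b := by
  obtain ⟨f, h0, hu, ha, hl⟩ := ha
  obtain ⟨g, h0', hu', hb, hl'⟩ := hb
  rw [map_neg] at hu'
  rcases hu.eq_or_lt with hz | hu
  · exact Or.inl ⟨f, h0, by simp [← hz], ha, hl⟩
  rcases hu'.eq_or_lt with hz | hu'
  · exact Or.inr ⟨g, h0', by linarith, hb, hl'⟩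
  have hnn : ∀ i, 0 ≤ ((-g u) • f + (f u) • g) (w i) := by
    intro i
    have := mul_nonneg hu'.le (h0 i)
    have := mul_nonneg hu.le (h0' i)
    simp only [LinearMap.add_apply, LinearMap.smul_apply, smul_eq_mul]
    linarith
  have hz : ((-g u) • f + (f u) • g) u = 0 := by
    simp; ring
  rcases le_total a b with hab | hab
  · left
    refine ⟨(-g u) • f + (f u) • g, hnn, by rw [map_neg, hz, neg_zero], ?_, ?_⟩
    · have := mul_pos hu' ha
      have := mul_nonneg hu.le (h0' a)
      simp only [LinearMap.add_apply, LinearMap.smul_apply, smul_eq_mul]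
      linarith
    · intro i hi
      simp [hl i hi, hl' i (hi.trans_le hab)]
  · right
    refine ⟨(-g u) • f + (f u) • g, hnn, hz.ge, ?_, ?_⟩
    · have := mul_pos hu hb
      have := mul_nonneg hu'.le (h0 b)
      simp only [LinearMap.add_apply, LinearMap.smul_apply, smul_eq_mul]
      linarith
    · intro i hi
      simp [hl' i hi, hl i (hi.trans_le hab)]

/-- Orthogonality. -/
lemma ext_orth (w : Fin n → V) (u : V) (a b : Fin n) (ha : ExtO w u a) (hb : ExtD w u b) :
    ExtO w (-u) a ∨ ExtD w (-u) b := by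
  obtain ⟨c, t, h0, ht, hs, ha, hl⟩ := ha
  obtain ⟨f, h0', hu, hb, hl'⟩ := hb
  rcases ht.eq_or_lt with rfl | ht
  · exact Or.inl ⟨c, 0, h0, le_rfl, by simpa using hs, ha, hl⟩
  right
  have h := congrArg f hs
  simp only [map_add, map_sum, map_smul, smul_eq_mul, map_zero] at h
  have h1 : 0 ≤ ∑ i, c i * f (w i) := Finset.sum_nonneg fun i _ => mul_nonneg (h0 i) (h0' i)
  have h2 : 0 ≤ t * f u := mul_nonneg ht.le hu
  have h3 : t * f u = 0 := by linarith
  have h4 : f u = 0 := (mul_eq_zero.1 h3).resolve_left ht.ne'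
  exact ⟨f, h0', by simp [h4], hb, hl'⟩

/-- Combinatorial consequence. -/
lemma pair_identity (w : Fin n → V) (u : V) (x y : ℝ) :
    x ^ {a | ExtD w u a}.ncard * y ^ {a | ExtO w u a}.ncard +
      x ^ {a | ExtD w (-u) a}.ncard * y ^ {a | ExtO w (-u) a}.ncard =
    x ^ {a | ODualActive w a}.ncard * y ^ {a | OActive w a}.ncard +
      x ^ {a | ODualActive (fun i => (span ℝ {u}).mkQ (w i)) a}.ncard *
        y ^ {a | OActive (fun i => (span ℝ {u}).mkQ (w i)) a}.ncard := by
  simp only [oActive_mkQ_iff, oDualActive_mkQ_iff, oDualActive_iff_or w u, oActive_iff_and w u]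
  have main : ((∀ a, ExtO w u a → ExtO w (-u) a) ∧ (∀ a, ExtD w (-u) a → ExtD w u a)) ∨
      ((∀ a, ExtO w (-u) a → ExtO w u a) ∧ (∀ a, ExtD w u a → ExtD w (-u) a)) := by
    have c1 := extO_cmp w u
    have c2 := extD_cmp w u
    have c3 := ext_orth w u
    have c4 := ext_orth w (-u)
    rw [neg_neg] at c4
    by_contra! hcon
    obtain ⟨h1, h2⟩ := hcon
    by_cases p1 : ∀ a, ExtO w u a → ExtO w (-u) a
    · obtain ⟨b, hb, hb'⟩ := h1 p1
      by_cases p2 : ∀ a, ExtO w (-u) a → ExtO w u a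
      · obtain ⟨d, hd, hd'⟩ := h2 p2
        have := c2 d b hd hb
        tauto
      · push Not at p2
        obtain ⟨a, ha, ha'⟩ := p2
        have := c4 a b ha hb
        tauto
    · push Not at p1
      obtain ⟨a, ha, ha'⟩ := p1
      by_cases p2 : ∀ a, ExtO w (-u) a → ExtO w u a
      · obtain ⟨d, hd, hd'⟩ := h2 p2
        have := c3 a d ha hd
        tauto
      · push Not at p2
        obtain ⟨b, hb, hb'⟩ := p2
        have := c1 a b ha hb
        tauto
  rcases main with ⟨hO, hD⟩ | ⟨hO, hD⟩
  · have e1 : ∀ a, (ExtD w u a ∨ ExtD w (-u) a) ↔ ExtD w u a := fun a => by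
      have := hD a; tauto
    have e2 : ∀ a, (ExtD w u a ∧ ExtD w (-u) a) ↔ ExtD w (-u) a := fun a => by
      have := hD a; tauto
    have e3 : ∀ a, (ExtO w u a ∨ ExtO w (-u) a) ↔ ExtO w (-u) a := fun a => by
      have := hO a; tauto
    have e4 : ∀ a, (ExtO w u a ∧ ExtO w (-u) a) ↔ ExtO w u a := fun a => by
      have := hO a; tauto
    simp only [e1, e2, e3, e4]
  · have e1 : ∀ a, (ExtD w u a ∨ ExtD w (-u) a) ↔ ExtD w (-u) a := fun a => by
      have := hD a; tauto
    have e2 : ∀ a, (ExtD w u a ∧ ExtD w (-u) a) ↔ ExtD w u a := fun a => by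
      have := hD a; tauto
    have e3 : ∀ a, (ExtO w u a ∨ ExtO w (-u) a) ↔ ExtO w u a := fun a => by
      have := hO a; tauto
    have e4 : ∀ a, (ExtO w u a ∧ ExtO w (-u) a) ↔ ExtO w (-u) a := fun a => by
      have := hO a; tauto
    simp only [e1, e2, e3, e4]
    rw [add_comm]

/-- Loops do not matter. -/
lemma extO_zero (w : Fin n → V) (a : Fin n) : ExtO w 0 a ↔ OActive w a := by
  rw [oActive_iff_and w 0, neg_zero, and_self_iff]

lemma extD_zero (w : Fin n → V) (a : Fin n) : ExtD w 0 a ↔ ODualActive w a := by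
  rw [oDualActive_iff_or w 0, neg_zero, or_self_iff]

/-- Coloops do not matter. -/
lemma extO_coloop (w : Fin n → V) (u : V) (hu : u ∉ span ℝ (range w)) (a : Fin n) :
    ExtO w u a ↔ OActive w a := by
  constructor
  · rintro ⟨c, t, h0, ht, hs, ha, hl⟩
    rcases eq_or_ne t 0 with rfl | hne
    · exact ⟨c, h0, by simpa using hs, ha, hl⟩
    · exfalso
      apply hu
      rw [← (span ℝ (range w)).smul_mem_iff hne, eq_neg_of_add_eq_zero_right hs]
      exact neg_mem (sum_mem fun i _ => smul_mem _ _ (subset_span ⟨i, rfl⟩))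
  · intro h
    exact ((oActive_iff_and w u a).1 h).1

lemma extD_coloop (w : Fin n → V) (u : V) (hu : u ∉ span ℝ (range w)) (a : Fin n) :
    ExtD w u a ↔ ODualActive w a := by
  constructor
  · intro h
    exact (oDualActive_iff_or w u a).2 (Or.inl h)
  · rintro ⟨f, h0, ha, hl⟩
    obtain ⟨g, hg, hk⟩ := Submodule.exists_le_ker_of_notMem hu
    have hz : ∀ i : Fin n, g (w i) = 0 := fun i => hk (subset_span ⟨i, rfl⟩)
    refine ⟨f + (-(f u) / g u) • g, ?_, ?_, ?_, ?_⟩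
    · simpa [hz] using h0
    · simp [hg]
    · simpa [hz] using ha
    · simpa [hz] using hl

/-! Counting. -/

lemma ncard_castSucc (P : Fin (n + 1) → Prop) [Decidable (P (Fin.last n))] :
    {a | P a}.ncard = {a : Fin n | P a.castSucc}.ncard + if P (Fin.last n) then 1 else 0 := by
  classical
  have e1 : {a | P a}.ncard = ∑ a, if P a then 1 else 0 := by
    rw [Set.ncard_eq_toFinset_card']; simp
  have e2 : {a : Fin n | P a.castSucc}.ncard = ∑ a : Fin n, if P a.castSucc then 1 else 0 := by
    rw [Set.ncard_eq_toFinset_card']; simp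
  rw [e1, e2, Fin.sum_univ_castSucc]
  congr

lemma last_notMem_map (A : Finset (Fin n)) : Fin.last n ∉ A.map Fin.castSuccEmb := by
  simp [Fin.castSucc_ne_last]

lemma sum_finset_fin_succ (F : Finset (Fin (n + 1)) → ℝ) :
    ∑ A, F A = ∑ A : Finset (Fin n),
      (F (A.map Fin.castSuccEmb) + F (insert (Fin.last n) (A.map Fin.castSuccEmb))) := by
  rw [Finset.sum_add_distrib, ← Finset.sum_filter_add_sum_filter_not Finset.univ
    (fun A : Finset (Fin (n + 1)) => Fin.last n ∉ A)]
  have pre : ∀ A : Finset (Fin (n + 1)), Fin.last n ∉ A →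
      (Finset.univ.filter fun i : Fin n => i.castSucc ∈ A).map Fin.castSuccEmb = A := by
    intro A hA
    ext i
    refine Fin.lastCases ?_ (fun i => ?_) i
    · simp [hA, Fin.castSucc_ne_last]
    · simp
  have post : ∀ A : Finset (Fin n),
      (Finset.univ.filter fun i : Fin n => i.castSucc ∈ A.map Fin.castSuccEmb) = A := by
    intro A
    ext i
    simp
  congr 1
  · refine Finset.sum_nbij' (fun A => Finset.univ.filter fun i : Fin n => i.castSucc ∈ A)
      (fun A => A.map Fin.castSuccEmb) ?_ ?_ ?_ ?_ ?_
    · simp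
    · intro A _
      simpa using last_notMem_map A
    · intro A hA
      exact pre A (by simpa using hA)
    · intro A _
      exact post A
    · intro A hA
      rw [pre A (by simpa using hA)]
  · have pre' : ∀ A : Finset (Fin (n + 1)), Fin.last n ∈ A → insert (Fin.last n)
        ((Finset.univ.filter fun i : Fin n => i.castSucc ∈ A).map Fin.castSuccEmb) = A := by
      intro A hA
      ext i
      refine Fin.lastCases ?_ (fun i => ?_) i
      · simp [hA]
      · simp [Fin.castSucc_ne_last]
    refine Finset.sum_nbij' (fun A => Finset.univ.filter fun i : Fin n => i.castSucc ∈ A)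
      (fun A => insert (Fin.last n) (A.map Fin.castSuccEmb)) ?_ ?_ ?_ ?_ ?_
    · simp
    · simp
    · intro A hA
      exact pre' A (by simpa using hA)
    · intro A _
      ext i
      simp [Fin.castSucc_ne_last]
    · intro A hA
      rw [pre' A (by simpa using hA)]

lemma reorient_map_castSucc (v : Fin (n + 1) → V) (A : Finset (Fin n)) :
    (fun i : Fin n => reorient v (A.map Fin.castSuccEmb) i.castSucc) =
      reorient (fun i => v i.castSucc) A := by
  funext i
  simp [reorient]

lemma reorient_insert_castSucc (v : Fin (n + 1) → V) (A : Finset (Fin n)) :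
    (fun i : Fin n => reorient v (insert (Fin.last n) (A.map Fin.castSuccEmb)) i.castSucc) =
      reorient (fun i => v i.castSucc) A := by
  funext i
  simp [reorient, Fin.castSucc_ne_last]

lemma reorient_map_last (v : Fin (n + 1) → V) (A : Finset (Fin n)) :
    reorient v (A.map Fin.castSuccEmb) (Fin.last n) = v (Fin.last n) := by
  simp [reorient, Fin.castSucc_ne_last]

lemma reorient_insert_last (v : Fin (n + 1) → V) (A : Finset (Fin n)) :
    reorient v (insert (Fin.last n) (A.map Fin.castSuccEmb)) (Fin.last n) = -v (Fin.last n) := by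
  simp [reorient]

lemma span_reorient (v : Fin n → V) (A : Finset (Fin n)) :
    span ℝ (range (reorient v A)) = span ℝ (range v) := by
  apply le_antisymm <;> rw [span_le] <;> rintro _ ⟨i, rfl⟩
  · have h : v i ∈ span ℝ (range v) := subset_span ⟨i, rfl⟩
    by_cases hi : i ∈ A
    · simpa [reorient, hi] using h
    · simpa [reorient, hi] using h
  · have h : reorient v A i ∈ span ℝ (range (reorient v A)) := subset_span ⟨i, rfl⟩
    by_cases hi : i ∈ A
    · simpa only [reorient, hi, if_true, neg_mem_iff, SetLike.mem_coe] using h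
    · simpa only [reorient, hi, if_false, SetLike.mem_coe] using h

lemma reorient_mkQ (v : Fin n → V) (u : V) (A : Finset (Fin n)) :
    reorient (fun i => (span ℝ {u}).mkQ (v i)) A =
      fun i => (span ℝ {u}).mkQ (reorient v A i) := by
  funext i
  by_cases hi : i ∈ A <;> simp [reorient, hi]

/-- The right-hand side of the theorem. -/
noncomputable def oSum (v : Fin n → V) (x y : ℝ) : ℝ :=
  ∑ A : Finset (Fin n), x ^ oStarCount v A * y ^ oCount v A

open Classical in
lemma oSum_succ (v : Fin (n + 1) → V) (x y : ℝ) :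
    oSum v x y = ∑ A : Finset (Fin n),
      ((x ^ {a | ExtD (reorient (fun i => v i.castSucc) A) (v (Fin.last n)) a}.ncard *
        y ^ {a | ExtO (reorient (fun i => v i.castSucc) A) (v (Fin.last n)) a}.ncard +
      x ^ {a | ExtD (reorient (fun i => v i.castSucc) A) (-v (Fin.last n)) a}.ncard *
        y ^ {a | ExtO (reorient (fun i => v i.castSucc) A) (-v (Fin.last n)) a}.ncard) *
      ((if v (Fin.last n) ∉ span ℝ (range fun i : Fin n => v i.castSucc) then x else 1) *
        (if v (Fin.last n) = 0 then y else 1))) := by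
  rw [oSum, sum_finset_fin_succ]
  refine Finset.sum_congr rfl fun A _ => ?_
  unfold oStarCount oCount
  simp only [ncard_castSucc, oActive_castSucc, oDualActive_castSucc, oActive_last,
    oDualActive_last, reorient_map_castSucc, reorient_insert_castSucc, reorient_map_last,
    reorient_insert_last, span_reorient, neg_mem_iff, neg_eq_zero, pow_add]
  split_ifs <;> simp <;> ring

lemma oSum_loop (v : Fin (n + 1) → V) (x y : ℝ) (h : v (Fin.last n) = 0) :
    oSum v x y = 2 * y * oSum (fun i => v i.castSucc) x y := by
  rw [oSum_succ, oSum, Finset.mul_sum]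
  refine Finset.sum_congr rfl fun A _ => ?_
  have hm : v (Fin.last n) ∈ span ℝ (range fun i : Fin n => v i.castSucc) := h ▸ zero_mem _
  rw [if_neg (not_not.2 hm), if_pos h]
  simp only [h, neg_zero, extO_zero, extD_zero, oStarCount, oCount]
  ring

lemma oSum_coloop (v : Fin (n + 1) → V) (x y : ℝ)
    (h : v (Fin.last n) ∉ span ℝ (range fun i : Fin n => v i.castSucc)) :
    oSum v x y = 2 * x * oSum (fun i => v i.castSucc) x y := by
  rw [oSum_succ, oSum, Finset.mul_sum]
  refine Finset.sum_congr rfl fun A _ => ?_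
  have h0 : v (Fin.last n) ≠ 0 := fun h0 => h (h0 ▸ zero_mem _)
  have h1 : v (Fin.last n) ∉ span ℝ (range (reorient (fun i : Fin n => v i.castSucc) A)) := by
    rwa [span_reorient]
  have h2 : -v (Fin.last n) ∉ span ℝ (range (reorient (fun i : Fin n => v i.castSucc) A)) := by
    rwa [neg_mem_iff]
  simp only [extO_coloop _ _ h1, extO_coloop _ _ h2, extD_coloop _ _ h1, extD_coloop _ _ h2,
    oStarCount, oCount]
  rw [if_pos h, if_neg h0]
  ring

lemma oSum_gen (v : Fin (n + 1) → V) (x y : ℝ) (h0 : v (Fin.last n) ≠ 0)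
    (h : v (Fin.last n) ∈ span ℝ (range fun i : Fin n => v i.castSucc)) :
    oSum v x y = oSum (fun i => v i.castSucc) x y +
      oSum (fun i : Fin n => (span ℝ {v (Fin.last n)}).mkQ (v i.castSucc)) x y := by
  rw [oSum_succ, oSum, oSum, ← Finset.sum_add_distrib]
  refine Finset.sum_congr rfl fun A _ => ?_
  rw [pair_identity, if_neg (not_not.2 h), if_neg h0]
  simp only [oStarCount, oCount, reorient_mkQ, mul_one]

/-! Tutte recursion. -/

lemma vrank_map (v : Fin (n + 1) → V) (A : Finset (Fin n)) :
    vrank v ↑(A.map Fin.castSuccEmb) = vrank (fun i => v i.castSucc) ↑A := by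
  rw [vrank, vrank, Finset.coe_map, Set.image_image]
  rfl

lemma span_insert_map (v : Fin (n + 1) → V) (S : Set (Fin n)) :
    span ℝ (v '' (insert (Fin.last n) (Fin.castSucc '' S))) =
      span ℝ ((fun i : Fin n => v i.castSucc) '' S) ⊔ span ℝ {v (Fin.last n)} := by
  rw [Set.image_insert_eq, Set.image_image, Set.insert_eq, span_union, sup_comm]

lemma vrank_insert (v : Fin (n + 1) → V) (A : Finset (Fin n)) :
    vrank v ↑(insert (Fin.last n) (A.map Fin.castSuccEmb)) =
      Module.finrank ℝ ↥(span ℝ ((fun i : Fin n => v i.castSucc) '' ↑A) ⊔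
        span ℝ {v (Fin.last n)}) := by
  rw [vrank, ← span_insert_map, Finset.coe_insert, Finset.coe_map]
  rfl

lemma vrank_univ_succ (v : Fin (n + 1) → V) :
    vrank v Set.univ =
      Module.finrank ℝ ↥(span ℝ ((fun i : Fin n => v i.castSucc) '' Set.univ) ⊔
        span ℝ {v (Fin.last n)}) := by
  have e : (Set.univ : Set (Fin (n + 1))) = insert (Fin.last n) (Fin.castSucc '' Set.univ) := by
    ext i
    refine Fin.lastCases ?_ (fun i => ?_) i <;> simp
  rw [vrank, ← span_insert_map, ← e]

lemma vrank_le_card (v : Fin n → V) (A : Finset (Fin n)) : vrank v ↑A ≤ A.card := by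
  classical
  have := finrank_span_finset_le_card (R := ℝ) (A.image v)
  rw [Set.finrank, Finset.coe_image] at this
  exact this.trans Finset.card_image_le

lemma vrank_le_univ [FiniteDimensional ℝ V] (v : Fin n → V) (S : Set (Fin n)) :
    vrank v S ≤ vrank v Set.univ :=
  Submodule.finrank_mono (span_mono (Set.image_mono (Set.subset_univ _)))

lemma finrank_sup_mkQ [FiniteDimensional ℝ V] (S : Set V) (u : V) (hu : u ≠ 0) :
    Module.finrank ℝ ↥(span ℝ S ⊔ span ℝ {u}) =
      Module.finrank ℝ ↥(span ℝ ((span ℝ {u}).mkQ '' S)) + 1 := by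
  have h := LinearMap.finrank_range_add_finrank_ker
    ((span ℝ {u}).mkQ.domRestrict (span ℝ S ⊔ span ℝ {u}))
  rw [← h]
  congr 1
  · rw [LinearMap.range_domRestrict, Submodule.map_sup, Submodule.map_span,
      Submodule.map_span (span ℝ {u}).mkQ {u}]
    have : (span ℝ {u}).mkQ u = 0 := by
      rw [mkQ_apply, Quotient.mk_eq_zero]
      exact mem_span_singleton_self u
    rw [Set.image_singleton, this, span_zero_singleton, sup_bot_eq]
  · rw [LinearMap.ker_domRestrict, ker_mkQ, ← finrank_span_singleton (K := ℝ) hu]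
    have hle : span ℝ {u} ≤ span ℝ S ⊔ span ℝ {u} := le_sup_right
    exact (Submodule.comapSubtypeEquivOfLe hle).finrank_eq

lemma tutte_loop (v : Fin (n + 1) → V) (x y : ℝ) (h : v (Fin.last n) = 0) :
    tutteV v x y = y * tutteV (fun i => v i.castSucc) x y := by
  rw [tutteV, sum_finset_fin_succ, tutteV, Finset.mul_sum]
  refine Finset.sum_congr rfl fun A _ => ?_
  rw [vrank_univ_succ, vrank_map, vrank_insert, h, span_zero_singleton, sup_bot_eq, sup_bot_eq,
    ← vrank, ← vrank, Finset.card_insert_of_notMem (last_notMem_map A), Finset.card_map,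
    Nat.sub_add_comm (vrank_le_card _ A), pow_succ]
  ring

lemma tutte_coloop [FiniteDimensional ℝ V] (v : Fin (n + 1) → V) (x y : ℝ)
    (h : v (Fin.last n) ∉ span ℝ (range fun i : Fin n => v i.castSucc)) :
    tutteV v x y = x * tutteV (fun i => v i.castSucc) x y := by
  have h0 : v (Fin.last n) ≠ 0 := fun h0 => h (h0 ▸ zero_mem _)
  have key : ∀ S : Set (Fin n),
      Module.finrank ℝ ↥(span ℝ ((fun i : Fin n => v i.castSucc) '' S) ⊔
        span ℝ {v (Fin.last n)}) = vrank (fun i : Fin n => v i.castSucc) S + 1 := by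
    intro S
    have hd : v (Fin.last n) ∉ span ℝ ((fun i : Fin n => v i.castSucc) '' S) :=
      fun hm => h (span_mono (Set.image_subset_range _ _) hm)
    have := Submodule.finrank_sup_add_finrank_inf_eq
      (span ℝ ((fun i : Fin n => v i.castSucc) '' S)) (span ℝ {v (Fin.last n)})
    rw [(disjoint_span_singleton_of_notMem hd).eq_bot, finrank_bot,
      finrank_span_singleton h0, add_zero] at this
    exact this
  rw [tutteV, sum_finset_fin_succ, tutteV, Finset.mul_sum]
  refine Finset.sum_congr rfl fun A _ => ?_
  rw [vrank_univ_succ, vrank_map, vrank_insert, key, key,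
    Finset.card_insert_of_notMem (last_notMem_map A), Finset.card_map,
    Nat.sub_add_comm (vrank_le_univ _ _), Nat.add_sub_add_right, Nat.add_sub_add_right, pow_succ]
  ring

lemma tutte_gen [FiniteDimensional ℝ V] (v : Fin (n + 1) → V) (x y : ℝ)
    (h0 : v (Fin.last n) ≠ 0)
    (h : v (Fin.last n) ∈ span ℝ (range fun i : Fin n => v i.castSucc)) :
    tutteV v x y = tutteV (fun i => v i.castSucc) x y +
      tutteV (fun i : Fin n => (span ℝ {v (Fin.last n)}).mkQ (v i.castSucc)) x y := by
  have hu : vrank v Set.univ = vrank (fun i : Fin n => v i.castSucc) Set.univ := by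
    rw [vrank_univ_succ, sup_eq_left.2, vrank]
    rw [span_le, Set.singleton_subset_iff, Set.image_univ]
    exact h
  have key : ∀ S : Set (Fin n),
      Module.finrank ℝ ↥(span ℝ ((fun i : Fin n => v i.castSucc) '' S) ⊔
        span ℝ {v (Fin.last n)}) =
      vrank (fun i : Fin n => (span ℝ {v (Fin.last n)}).mkQ (v i.castSucc)) S + 1 := by
    intro S
    rw [finrank_sup_mkQ _ _ h0, Set.image_image, vrank]
  rw [tutteV, sum_finset_fin_succ, tutteV, tutteV, ← Finset.sum_add_distrib]
  refine Finset.sum_congr rfl fun A _ => ?_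
  congr 1
  · rw [hu, vrank_map, Finset.card_map]
  · rw [vrank_univ_succ, vrank_insert, key, key,
      Finset.card_insert_of_notMem (last_notMem_map A), Finset.card_map,
      Nat.add_sub_add_right, Nat.add_sub_add_right]

end ext

theorem tutte_eq_oSum (x y : ℝ) : ∀ (n : ℕ) {V : Type*} [AddCommGroup V] [Module ℝ V]
    [FiniteDimensional ℝ V] (v : Fin n → V), tutteV v (2 * x) (2 * y) = oSum v x y := by
  intro n
  induction n with
  | zero =>
    intro V _ _ _ v
    have e2 : ∀ S : Set (Fin 0), S.ncard = 0 := fun S => by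
      rw [Subsingleton.elim S ∅, Set.ncard_empty]
    have e3 : ∀ S : Set (Fin 0), vrank v S = 0 := fun S => by
      rw [Subsingleton.elim S ∅, vrank, Set.image_empty, span_empty, finrank_bot]
    have e4 : ∀ S : Finset (Fin 0), S.card = 0 := fun S => by
      rw [Subsingleton.elim S ∅, Finset.card_empty]
    simp [tutteV, oSum, oStarCount, oCount, e2, e3, e4]
  | succ n ih =>
    intro V _ _ _ v
    by_cases h0 : v (Fin.last n) = 0
    · rw [tutte_loop v _ _ h0, oSum_loop v _ _ h0, ih]
    · by_cases h : v (Fin.last n) ∈ span ℝ (range fun i : Fin n => v i.castSucc)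
      · rw [tutte_gen v _ _ h0 h, oSum_gen v _ _ h0 h, ih, ih]
      · rw [tutte_coloop v _ _ h, oSum_coloop v _ _ h, ih]

/-- 2-variable orientation-activity expansion of the Tutte polynomial:
`t(2x, 2y) = ∑_{A ⊆ Fin n} x^o*(A) · y^o(A)`. -/
theorem statement7 {n : ℕ} {V : Type*} [AddCommGroup V] [Module ℝ V] [FiniteDimensional ℝ V]
    (v : Fin n → V) (x y : ℝ) :
    tutteV v (2 * x) (2 * y) =
      ∑ A : Finset (Fin n), x ^ oStarCount v A * y ^ oCount v A := by
  exact tutte_eq_oSum x y n v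
end
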